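/- Let T = {t_1, ..., t_M} be a finite set and (f(t_1), ..., f(t_M)) a centered Gaussian random vector with Var(f(t_i)) = 1 for every i, defined under a probability measure P. Let σ, σ' : T → (0, ∞) with σ'(t_i) ≤ σ(t_i) for all i and max_i σ'(t_i) < max_i σ(t_i), and take the mean functions μ = μ' ≡ 0. Let Q† be the probability measure with dQ†/dP = [Σ_{i=1}^M 1{σ(t_i)f(t_i) > b}] / [Σ_{i=1}^M P(σ(t_i)f(t_i) > b)]. Then there exists a constant ε > 0 such that lim_{b→∞} E^{Q†}[ (dP/dQ†)² · 1{max_i σ'(t_i)f(t_i) > b} ] / w_{σ',0}(b)^{2−ε} = ∞, where w_{σ',0}(b) = P(max_i σ'(t_i)f(t_i) > b). -/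

import Mathlib

open MeasureTheory ProbabilityTheory Filter Set

/-!
Write `N` for the number of exceedances `σ i * f i > b`, `D` for its mean, and `w` for the
probability of the rare event `A = {max_i σ' i * f i > b}`. Since `dP/dQ† = D / N` and `N ≤ M`, the
second moment is `E^P[D / N; A] ≥ D * w / M`. On the logarithmic scale `D` is at least
`exp (-b² / (2 (max σ)²))`, whereas `w` is at most `exp (-b² / (2 (max σ')²))`. Hence `D / w ^ p`
diverges as soon as `p > (max σ' / max σ)²`; since `max σ' < max σ`, some `p = 1 - ε` with `ε > 0`
qualifies.
-/

section GaussianTail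

variable {m x a : ℝ} {v : NNReal}

lemma measureReal_Ioi_gaussianReal_pos (hv : v ≠ 0) : 0 < (gaussianReal m v).real (Ioi x) := by
  have := (gaussianReal_absolutelyContinuous' m hv).isOpenPosMeasure
  exact ENNReal.toReal_pos (isOpen_Ioi.measure_ne_zero _ nonempty_Ioi) (measure_ne_top _ _)

lemma antitoneOn_gaussianPDFReal : AntitoneOn (gaussianPDFReal m v) (Ici m) := by
  intro y hy z _ hyz
  have : 0 ≤ y - m := sub_nonneg.2 hy
  simp only [gaussianPDFReal_def]
  gcongr

lemma mul_gaussianPDFReal_le_measureReal_Ioi {δ : ℝ} (hv : v ≠ 0) (hx : m ≤ x) (hδ : 0 ≤ δ) :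
    δ * gaussianPDFReal m v (x + δ) ≤ (gaussianReal m v).real (Ioi x) := by
  calc δ * gaussianPDFReal m v (x + δ)
      = gaussianPDFReal m v (x + δ) * volume.real (Ioc x (x + δ)) := by
        rw [Real.volume_real_Ioc_of_le (by linarith), add_sub_cancel_left, mul_comm]
    _ ≤ ∫ y in Ioc x (x + δ), gaussianPDFReal m v y :=
        setIntegral_ge_of_const_le_real measurableSet_Ioc measure_Ioc_lt_top.ne
          (fun y hy => antitoneOn_gaussianPDFReal (hx.trans hy.1.le)
            (hx.trans (hy.1.le.trans hy.2)) hy.2)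
          (integrable_gaussianPDFReal m v).integrableOn
    _ = (gaussianReal m v).real (Ioc x (x + δ)) := by
        rw [measureReal_def, gaussianReal_apply_eq_integral m hv,
          ENNReal.toReal_ofReal (integral_nonneg (gaussianPDFReal_nonneg m v))]
    _ ≤ (gaussianReal m v).real (Ioi x) := measureReal_mono Ioc_subset_Ioi_self

lemma tendsto_mul_sq_sub_mul_add_one_sq_atTop {c : ℝ} (hca : c < a) :
    Tendsto (fun x : ℝ => a * x ^ 2 - c * (x + 1) ^ 2) atTop atTop := by
  have hlin : Tendsto (fun x : ℝ => (a - c) * x - 2 * c) atTop atTop :=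
    tendsto_atTop_add_const_right _ _ (tendsto_id.const_mul_atTop (sub_pos.2 hca))
  refine (tendsto_atTop_add_const_right _ (-c) (tendsto_id.atTop_mul_atTop₀ hlin)).congr fun x => ?_
  simp only [id]
  ring

lemma tendsto_exp_mul_sq_mul_measureReal_Ioi_gaussianReal (hv : v ≠ 0) (ha : (2 * v : ℝ)⁻¹ < a) :
    Tendsto (fun x : ℝ => Real.exp (a * x ^ 2) * (gaussianReal 0 v).real (Ioi x)) atTop atTop := by
  have hdiv := (Real.tendsto_exp_atTop.comp
    (tendsto_mul_sq_sub_mul_add_one_sq_atTop ha)).const_mul_atTop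
    (show 0 < (Real.sqrt (2 * Real.pi * v))⁻¹ by positivity)
  refine tendsto_atTop_mono' _ ?_ hdiv
  filter_upwards [eventually_ge_atTop 0] with x hx
  calc (Real.sqrt (2 * Real.pi * v))⁻¹ * Real.exp (a * x ^ 2 - (2 * v : ℝ)⁻¹ * (x + 1) ^ 2)
      = Real.exp (a * x ^ 2) * (1 * gaussianPDFReal 0 v (x + 1)) := by
        rw [gaussianPDFReal_def, sub_eq_add_neg, Real.exp_add]
        ring_nf
    _ ≤ Real.exp (a * x ^ 2) * (gaussianReal 0 v).real (Ioi x) := by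
        gcongr
        exact mul_gaussianPDFReal_le_measureReal_Ioi hv hx zero_le_one

end GaussianTail

section Exceedance

variable {Ω ι : Type*} [MeasurableSpace Ω] {P : Measure Ω} {Y : ι → Ω → ℝ} {b : ℝ}

lemma nullMeasurableSet_exists_lt [Countable ι] (hY : ∀ i, AEMeasurable (Y i) P) :
    NullMeasurableSet {ω | ∃ i, b < Y i ω} P := by
  rw [ofPred_exists]
  exact .iUnion fun i => nullMeasurableSet_lt aemeasurable_const (hY i)

lemma measureReal_exists_lt_pos {m : ℝ} {v : NNReal} {k : ι}
    (hY : HasLaw (Y k) (gaussianReal m v) P) (hv : v ≠ 0) :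
    0 < P.real {ω | ∃ i, b < Y i ω} := by
  have := hY.isProbabilityMeasure
  calc 0 < (gaussianReal m v).real (Ioi b) := measureReal_Ioi_gaussianReal_pos hv
    _ = P.real {ω | b < Y k ω} := (hY.measureReal_eq measurableSet_Ioi).symm
    _ ≤ P.real {ω | ∃ i, b < Y i ω} := measureReal_mono (ofPred_subset_ofPred.2 fun _ hω => ⟨k, hω⟩)

lemma hasSubgaussianMGF_of_hasLaw_gaussianReal {X : Ω → ℝ} {v w : NNReal}
    (hX : HasLaw X (gaussianReal 0 v) P) (hvw : v ≤ w) : HasSubgaussianMGF X w P where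
  integrable_exp_mul t := by
    have h := integrable_exp_mul_gaussianReal (μ := 0) (v := v) t
    rw [← hX.map_eq] at h
    exact h.comp_aemeasurable hX.aemeasurable
  mgf_le t := by
    rw [mgf_gaussianReal hX.map_eq]
    simp only [zero_mul, zero_add]
    gcongr

lemma measureReal_exists_lt_le_card_mul_exp [Fintype ι] [IsFiniteMeasure P] {w : NNReal}
    (hY : ∀ i, HasSubgaussianMGF (Y i) w P) (hb : 0 ≤ b) :
    P.real {ω | ∃ i, b < Y i ω} ≤ Fintype.card ι * Real.exp (-b ^ 2 / (2 * w)) := by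
  calc P.real {ω | ∃ i, b < Y i ω}
      = P.real (⋃ i, {ω | b < Y i ω}) := by rw [ofPred_exists]
    _ ≤ ∑ i, P.real {ω | b < Y i ω} := measureReal_iUnion_fintype_le _
    _ ≤ ∑ _i : ι, Real.exp (-b ^ 2 / (2 * w)) :=
        Finset.sum_le_sum fun i _ =>
          (measureReal_mono (ofPred_subset_ofPred.2 fun _ => le_of_lt)).trans
            ((hY i).measure_ge_le hb)
    _ = Fintype.card ι * Real.exp (-b ^ 2 / (2 * w)) := by
        rw [Finset.sum_const, Finset.card_univ, nsmul_eq_mul]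

end Exceedance

section ChangeOfMeasure

variable {Ω ι : Type*} [Fintype ι] {X Y : ι → Ω → ℝ} {b : ℝ}

/-- The number of indices `i` at which the field `X` exceeds the level `b`, as a real number. -/
noncomputable def exceedanceCount (X : ι → Ω → ℝ) (b : ℝ) (ω : Ω) : ℝ :=
  ∑ i, if b < X i ω then 1 else 0

lemma exceedanceCount_le_card (ω : Ω) : exceedanceCount X b ω ≤ Fintype.card ι := by
  rw [exceedanceCount, Finset.sum_boole]
  exact mod_cast Finset.card_le_univ _

lemma one_le_exceedanceCount {ω : Ω} (h : ∃ i, b < X i ω) : 1 ≤ exceedanceCount X b ω := by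
  obtain ⟨i, hi⟩ := h
  rw [exceedanceCount, Finset.sum_boole, Nat.one_le_cast, Finset.one_le_card]
  exact ⟨i, Finset.mem_filter.2 ⟨Finset.mem_univ i, hi⟩⟩

lemma exceedanceCount_nonneg (ω : Ω) : 0 ≤ exceedanceCount X b ω :=
  Finset.sum_nonneg fun i _ => by positivity

variable [MeasurableSpace Ω] {P : Measure Ω} {A : Set Ω}

/-- The mean of `exceedanceCount X b` under `P`, which normalizes `exceedanceMeasure P X b`. -/
noncomputable def expectedExceedances (P : Measure Ω) (X : ι → Ω → ℝ) (b : ℝ) : ℝ :=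
  ∑ i, P.real {ω | b < X i ω}

/-- The Adler–Blanchet–Liu importance-sampling measure `Q†` of the field `X` at level `b`. -/
noncomputable def exceedanceMeasure (P : Measure Ω) (X : ι → Ω → ℝ) (b : ℝ) : Measure Ω :=
  P.withDensity fun ω => ENNReal.ofReal (exceedanceCount X b ω / expectedExceedances P X b)

/-- The second moment `E^{Q†}[(dP/dQ†)²; A]` of the importance-sampling estimator of `P A`. The
quotient stands for `dP/dQ†` only where some exceedance occurs; elsewhere it is `x / 0 = 0`. -/
noncomputable def estimatorSecondMoment (P : Measure Ω) (X : ι → Ω → ℝ) (b : ℝ) (A : Set Ω) : ℝ :=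
  ∫ ω in A, (expectedExceedances P X b / exceedanceCount X b ω) ^ 2 ∂exceedanceMeasure P X b

lemma expectedExceedances_nonneg : 0 ≤ expectedExceedances P X b :=
  Finset.sum_nonneg fun _ _ => measureReal_nonneg

lemma measureReal_le_expectedExceedances (i : ι) :
    P.real {ω | b < X i ω} ≤ expectedExceedances P X b :=
  Finset.single_le_sum (f := fun i => P.real {ω | b < X i ω}) (fun _ _ => measureReal_nonneg)
    (Finset.mem_univ i)

lemma aemeasurable_exceedanceCount (hX : ∀ i, AEMeasurable (X i) P) :
    AEMeasurable (exceedanceCount X b) P :=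
  Finset.aemeasurable_fun_sum _ fun i _ =>
    (measurable_const.ite measurableSet_Ioi measurable_const).comp_aemeasurable (hX i)

lemma estimatorSecondMoment_eq_setIntegral [SFinite P] (hX : ∀ i, AEMeasurable (X i) P) :
    estimatorSecondMoment P X b A =
      ∫ ω in A, expectedExceedances P X b / exceedanceCount X b ω ∂P := by
  have hdensity : AEMeasurable
      (fun ω => ENNReal.ofReal (exceedanceCount X b ω / expectedExceedances P X b)) P :=
    ((aemeasurable_exceedanceCount hX).div_const _).ennreal_ofReal
  rw [estimatorSecondMoment, exceedanceMeasure, restrict_withDensity',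
    integral_withDensity_eq_integral_toReal_smul₀ hdensity.restrict (by simp)]
  congr 1 with ω
  rw [ENNReal.toReal_ofReal (div_nonneg (exceedanceCount_nonneg ω) expectedExceedances_nonneg),
    smul_eq_mul, ← inv_div, sq, ← mul_assoc, inv_mul_mul_self]

lemma expectedExceedances_div_card_mul_le_estimatorSecondMoment [IsFiniteMeasure P]
    (hX : ∀ i, AEMeasurable (X i) P) (hA : NullMeasurableSet A P)
    (hAX : ∀ ω ∈ A, ∃ i, b < X i ω) :
    expectedExceedances P X b / Fintype.card ι * P.real A ≤ estimatorSecondMoment P X b A := by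
  have hcount : ∀ ω ∈ A, 1 ≤ exceedanceCount X b ω := fun ω hω => one_le_exceedanceCount (hAX ω hω)
  have hint : IntegrableOn (fun ω => expectedExceedances P X b / exceedanceCount X b ω) A P := by
    refine Measure.integrableOn_of_bounded (M := expectedExceedances P X b) (measure_ne_top P A)
      ((aemeasurable_exceedanceCount hX).const_div _).aestronglyMeasurable ?_
    filter_upwards [ae_restrict_mem₀ hA] with ω hω
    rw [Real.norm_of_nonneg (div_nonneg expectedExceedances_nonneg (exceedanceCount_nonneg ω))]
    exact div_le_self expectedExceedances_nonneg (hcount ω hω)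
  calc expectedExceedances P X b / Fintype.card ι * P.real A
      = ∫ _ω in A, expectedExceedances P X b / Fintype.card ι ∂P := by
        rw [setIntegral_const, smul_eq_mul, mul_comm]
    _ ≤ ∫ ω in A, expectedExceedances P X b / exceedanceCount X b ω ∂P :=
        setIntegral_mono_on₀ integrableOn_const hint hA fun ω hω =>
          div_le_div_of_nonneg_left expectedExceedances_nonneg
            (zero_lt_one.trans_le (hcount ω hω)) (exceedanceCount_le_card ω)
    _ = estimatorSecondMoment P X b A := (estimatorSecondMoment_eq_setIntegral hX).symm

lemma tendsto_expectedExceedances_div_rpow_atTop [IsFiniteMeasure P]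
    {v w : NNReal} {p : ℝ} {j : ι} (hX : HasLaw (X j) (gaussianReal 0 v) P)
    (hY : ∀ i, HasSubgaussianMGF (Y i) w P) (hpos : ∀ b, 0 < P.real {ω | ∃ i, b < Y i ω})
    (hw : 0 < w) (hp : (w : ℝ) < p * v) :
    Tendsto (fun b => expectedExceedances P X b / P.real {ω | ∃ i, b < Y i ω} ^ p)
      atTop atTop := by
  have hpv : 0 < p * v := w.coe_nonneg.trans_lt hp
  have hp0 : 0 < p := pos_of_mul_pos_left hpv v.coe_nonneg
  have hv : 0 < (v : ℝ) := pos_of_mul_pos_right hpv hp0.le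
  have hrate : (2 * v : ℝ)⁻¹ < p / (2 * w) := by
    rw [inv_eq_one_div, div_lt_div_iff₀ (by positivity) (mul_pos two_pos (NNReal.coe_pos.2 hw))]
    linarith
  have hcard : 0 < (Fintype.card ι : ℝ) := mod_cast Fintype.card_pos_iff.2 ⟨j⟩
  refine tendsto_atTop_mono' _ ?_ ((tendsto_exp_mul_sq_mul_measureReal_Ioi_gaussianReal
    (NNReal.coe_pos.1 hv).ne' hrate).const_mul_atTop
    (show 0 < ((Fintype.card ι : ℝ) ^ p)⁻¹ by positivity))
  filter_upwards [eventually_ge_atTop 0] with b hb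
  have htail : (gaussianReal 0 v).real (Ioi b) ≤ expectedExceedances P X b :=
    (hX.measureReal_eq measurableSet_Ioi).symm.trans_le (measureReal_le_expectedExceedances j)
  calc ((Fintype.card ι : ℝ) ^ p)⁻¹ *
        (Real.exp (p / (2 * w) * b ^ 2) * (gaussianReal 0 v).real (Ioi b))
      = (gaussianReal 0 v).real (Ioi b) /
          (Fintype.card ι * Real.exp (-b ^ 2 / (2 * w))) ^ p := by
        rw [Real.mul_rpow hcard.le (Real.exp_pos _).le, ← Real.exp_mul,
          show -b ^ 2 / (2 * w) * p = -(p / (2 * w) * b ^ 2) by ring, Real.exp_neg]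
        field_simp
    _ ≤ expectedExceedances P X b / P.real {ω | ∃ i, b < Y i ω} ^ p := by
        have := Real.rpow_pos_of_pos (hpos b) p
        gcongr
        · exact expectedExceedances_nonneg
        · exact measureReal_exists_lt_le_card_mul_exp hY hb

lemma tendsto_estimatorSecondMoment_div_rpow_atTop [Nonempty ι] [IsFiniteMeasure P]
    {q : ℝ} (hX : ∀ i, AEMeasurable (X i) P) (hY : ∀ i, AEMeasurable (Y i) P)
    (hpos : ∀ b, 0 < P.real {ω | ∃ i, b < Y i ω})
    (hYX : ∀ᶠ b in atTop, ∀ i ω, b < Y i ω → b < X i ω)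
    (hq : Tendsto (fun b => expectedExceedances P X b / P.real {ω | ∃ i, b < Y i ω} ^ (q - 1))
      atTop atTop) :
    Tendsto (fun b => estimatorSecondMoment P X b {ω | ∃ i, b < Y i ω} /
      P.real {ω | ∃ i, b < Y i ω} ^ q) atTop atTop := by
  have hcard : 0 < (Fintype.card ι : ℝ) := mod_cast Fintype.card_pos
  refine tendsto_atTop_mono' _ ?_ (hq.atTop_div_const hcard)
  filter_upwards [hYX] with b hb
  have hsecond := expectedExceedances_div_card_mul_le_estimatorSecondMoment hX
    (nullMeasurableSet_exists_lt hY) fun ω hω => hω.imp fun i => hb i ω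
  rw [le_div_iff₀ (Real.rpow_pos_of_pos (hpos b) q)]
  refine le_trans (le_of_eq ?_) hsecond
  rw [Real.rpow_sub_one (hpos b).ne']
  have := Real.rpow_pos_of_pos (hpos b) q
  field_simp [(hpos b).ne']

end ChangeOfMeasure

theorem nonuniform_efficiency_part_i_general
    {Ω : Type*} [MeasurableSpace Ω] {P : Measure Ω} {ι : Type*} [Fintype ι] [Nonempty ι]
    {f : ι → Ω → ℝ} (hf : ∀ i, HasLaw (f i) (gaussianReal 0 1) P)
    {σ σ' : ι → ℝ} (hσ' : ∀ i, 0 < σ' i) (hle : ∀ i, σ' i ≤ σ i) {ε : ℝ}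
    (hε : ε < 1 - (Finset.univ.sup' Finset.univ_nonempty σ' /
      Finset.univ.sup' Finset.univ_nonempty σ) ^ 2) :
    Tendsto (fun b => estimatorSecondMoment P (fun i ω => σ i * f i ω) b
        {ω | ∃ i, b < σ' i * f i ω} / P.real {ω | ∃ i, b < σ' i * f i ω} ^ (2 - ε))
      atTop atTop := by
  obtain ⟨j, -, hj⟩ := Finset.exists_mem_eq_sup' Finset.univ_nonempty σ
  obtain ⟨k, -, hk⟩ := Finset.exists_mem_eq_sup' Finset.univ_nonempty σ'
  have := (hf j).isProbabilityMeasure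
  have hσj : 0 < σ j := (hσ' j).trans_le (hle j)
  have hlaw (c : ℝ) (i : ι) :
      HasLaw (fun ω => c * f i ω) (gaussianReal 0 (.mk (c ^ 2) (sq_nonneg c))) P := by
    simpa using gaussianReal_const_mul (hf i) c
  have hsub (i : ι) : HasSubgaussianMGF (fun ω => σ' i * f i ω) (.mk (σ' k ^ 2) (sq_nonneg _)) P :=
    hasSubgaussianMGF_of_hasLaw_gaussianReal (hlaw (σ' i) i) <|
      pow_le_pow_left₀ (hσ' i).le (hk ▸ Finset.le_sup' σ' (Finset.mem_univ i)) 2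
  have hvar : (0 : NNReal) < .mk (σ' k ^ 2) (sq_nonneg _) := pow_pos (hσ' k) 2
  have hpos (b : ℝ) : 0 < P.real {ω | ∃ i, b < σ' i * f i ω} :=
    measureReal_exists_lt_pos (hlaw (σ' k) k) hvar.ne'
  have hexponent : σ' k ^ 2 < (2 - ε - 1) * σ j ^ 2 := by
    rw [hj, hk, div_pow] at hε
    rw [← div_lt_iff₀ (pow_pos hσj 2)]
    linarith
  refine tendsto_estimatorSecondMoment_div_rpow_atTop (fun i => (hlaw (σ i) i).aemeasurable)
    (fun i => (hlaw (σ' i) i).aemeasurable) hpos ?_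
    (tendsto_expectedExceedances_div_rpow_atTop (hlaw (σ j) j) hsub hpos hvar hexponent)
  filter_upwards [eventually_gt_atTop 0] with b hb i ω hω
  have hfpos : 0 < f i ω := pos_of_mul_pos_right (hb.trans hω) (hσ' i).le
  exact hω.trans_le (mul_le_mul_of_nonneg_right (hle i) hfpos.le)

/-- **Non-uniform efficiency of the Adler–Blanchet–Liu change of measure (part i).**
`T = {t_1, …, t_M}` is modelled by a nonempty finite index type `ι`, and
`(f i)_{i ∈ ι}` is a centered Gaussian random vector with unit variances under `P`
(every linear combination is centered Gaussian, and each marginal is standard normal).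
`Q† = P.withDensity (num/den)` where `num ω = Σ_i 1{σ i · f i ω > b}` and
`den = Σ_i P(σ i · f i > b)`.  If `σ' ≤ σ` pointwise and `max σ' < max σ`, then for some
`ε > 0` the ratio  `E^{Q†}[(dP/dQ†)² ; max_i σ' i · f i > b] / w_{σ',0}(b)^{2-ε}`
tends to infinity as `b → ∞`. -/
theorem nonuniform_efficiency_part_i
    {Ω : Type*} [MeasurableSpace Ω] (P : Measure Ω) [IsProbabilityMeasure P]
    {ι : Type*} [Fintype ι] [Nonempty ι]
    (f : ι → Ω → ℝ)
    (hmeas : ∀ i, Measurable (f i))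
    (hGauss : ∀ c : ι → ℝ, ∃ v : NNReal,
      Measure.map (fun ω => ∑ i, c i * f i ω) P = gaussianReal 0 v)
    (hstd : ∀ i, Measure.map (f i) P = gaussianReal 0 1)
    (σ σ' : ι → ℝ)
    (hσpos : ∀ i, 0 < σ i) (hσ'pos : ∀ i, 0 < σ' i)
    (hle : ∀ i, σ' i ≤ σ i)
    (hmax : Finset.univ.sup' Finset.univ_nonempty σ' <
      Finset.univ.sup' Finset.univ_nonempty σ) :
    ∃ ε > (0 : ℝ), Tendsto
      (fun b : ℝ =>
        (∫ ω in {ω | ∃ i, σ' i * f i ω > b},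
            ((∑ i, (P {ω' | σ i * f i ω' > b}).toReal) /
              (∑ i, if σ i * f i ω > b then (1 : ℝ) else 0)) ^ 2
          ∂(P.withDensity fun ω =>
              ENNReal.ofReal ((∑ i, if σ i * f i ω > b then (1 : ℝ) else 0) /
                (∑ i, (P {ω' | σ i * f i ω' > b}).toReal)))) /
        ((P {ω | ∃ i, σ' i * f i ω > b}).toReal) ^ ((2 : ℝ) - ε))
      atTop atTop := by
  have hratio : 0 < 1 - (Finset.univ.sup' Finset.univ_nonempty σ' /
      Finset.univ.sup' Finset.univ_nonempty σ) ^ 2 := by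
    have hsup' : 0 < Finset.univ.sup' Finset.univ_nonempty σ' :=
      (Finset.lt_sup'_iff _).2 ⟨Classical.arbitrary ι, Finset.mem_univ _, hσ'pos _⟩
    have hsup := hsup'.trans hmax
    exact sub_pos.2 (pow_lt_one₀ (by positivity) ((div_lt_one hsup).2 hmax) two_ne_zero)
  obtain ⟨ε, hεpos, hε⟩ := exists_between hratio
  exact ⟨ε, hεpos, nonuniform_efficiency_part_i_general
    (fun i => ⟨(hmeas i).aemeasurable, hstd i⟩) hσ'pos hle hε⟩
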